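/- arXiv:1406.3062 — 6 statements merged into one kernel-verified Lean document; each statement's English description precedes it below -/
import Mathlib

section
/- Let I be a σ-ideal on ℝ satisfying the standing assumptions (ℝ ∉ I, translation invariance, scale invariance, Borel base, Steinhaus property). If B ⊆ ℝ is a Borel set with B ∉ I and D ⊆ ℝ is a countable dense subset of ℝ, then the complement ℝ \ (B + D) belongs to I (i.e., the Minkowski sum B + D is I-residual). -/
open Cardinal MeasureTheory Set
open scoped Pointwise

/-- `I` is a σ-ideal on `ℝ`. -/
def IsSigmaIdeal (I : Set (Set ℝ)) : Prop :=
  ∅ ∈ I ∧ (∀ A B : Set ℝ, A ⊆ B → B ∈ I → A ∈ I) ∧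
    ∀ f : ℕ → Set ℝ, (∀ n, f n ∈ I) → (⋃ n, f n) ∈ I

/-- The standing assumptions on the σ-ideal `I`: nontriviality, translation and scale
invariance, Borel base and the Steinhaus property. -/
def StandingIdeal (I : Set (Set ℝ)) : Prop :=
  IsSigmaIdeal I ∧
  Set.univ ∉ I ∧
  (∀ x : ℝ, ∀ S ∈ I, (fun y => x + y) '' S ∈ I) ∧
  (∀ x : ℝ, ∀ S ∈ I, (fun y => x * y) '' S ∈ I) ∧
  (∀ S ∈ I, ∃ B ∈ I, MeasurableSet B ∧ S ⊆ B) ∧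
  (∀ A B : Set ℝ, MeasurableSet A → MeasurableSet B → A ∉ I → B ∉ I →
    (interior (A - B)).Nonempty)

/-- `L` is an `I`-Luzin set. -/
def IsLuzinFor (I : Set (Set ℝ)) (L : Set ℝ) : Prop :=
  Cardinal.mk L = Cardinal.continuum ∧ ∀ S ∈ I, (L ∩ S).Countable

/-- `L` is a strong `I`-Luzin set. -/
def IsStrongLuzinFor (I : Set (Set ℝ)) (L : Set ℝ) : Prop :=
  IsLuzinFor I L ∧ ∀ B : Set ℝ, MeasurableSet B → B ∉ I → ¬ (L ∩ B).Countable

/-- `L` is a Luzin set. -/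
def IsLuzin (L : Set ℝ) : Prop :=
  Cardinal.mk L = Cardinal.continuum ∧ ∀ M : Set ℝ, IsMeagre M → (L ∩ M).Countable

/-- `L` is a strong Luzin set. -/
def IsStrongLuzin (L : Set ℝ) : Prop :=
  IsLuzin L ∧ ∀ B : Set ℝ, MeasurableSet B → ¬ IsMeagre B → ¬ (L ∩ B).Countable

/-- `S` is a Sierpiński set. -/
def IsSierpinski (S : Set ℝ) : Prop :=
  Cardinal.mk S = Cardinal.continuum ∧ ∀ N : Set ℝ, volume N = 0 → (S ∩ N).Countable

/-- `S` is a strong Sierpiński set. -/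
def IsStrongSierpinski (S : Set ℝ) : Prop :=
  IsSierpinski S ∧ ∀ B : Set ℝ, MeasurableSet B → 0 < volume B → ¬ (S ∩ B).Countable

/-- `X` is a Bernstein set. -/
def IsBernstein (X : Set ℝ) : Prop :=
  ∀ P : Set ℝ, Perfect P → P.Nonempty → (P ∩ X).Nonempty ∧ (P ∩ Xᶜ).Nonempty

/-- `A ⊆ ℝ²` is completely `𝓜`-nonmeasurable. -/
def CompletelyMeagerNonmeasurable (A : Set (ℝ × ℝ)) : Prop :=
  ∀ B : Set (ℝ × ℝ), MeasurableSet B → ¬ IsMeagre B → (A ∩ B).Nonempty ∧ ¬ B ⊆ A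

/-- `A ⊆ ℝ²` is completely `𝓝`-nonmeasurable. -/
def CompletelyNullNonmeasurable (A : Set (ℝ × ℝ)) : Prop :=
  ∀ B : Set (ℝ × ℝ), MeasurableSet B → 0 < volume B → (A ∩ B).Nonempty ∧ ¬ B ⊆ A

/-- `n`-fold Minkowski sum (with `nFoldSum A 0 = {0}`). -/
def nFoldSum (A : Set ℝ) : ℕ → Set ℝ
  | 0 => {0}
  | n + 1 => nFoldSum A n + A

/-!
The complement `C` of `D + B` is disjoint from `D + B`, that is, `D` misses `C - B`. As `D` is
dense, `C - B` has empty interior, so the Steinhaus property forces the measurable set `C` into `I`.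
-/

section Pointwise

variable {G : Type*} [AddGroup G]

theorem measurableSet_vadd_of_countable {X : Type*} [AddAction G X] [MeasurableSpace X]
    [MeasurableConstVAdd G X] {s : Set G} {t : Set X} (hs : s.Countable) (ht : MeasurableSet t) :
    MeasurableSet (s +ᵥ t) := by
  rw [← iUnion_vadd_set]
  exact .biUnion hs fun g _ ↦ ht.const_vadd g

theorem disjoint_sub_iff_disjoint_add {s t u : Set G} :
    Disjoint (s - t) u ↔ Disjoint s (u + t) := by
  simp only [disjoint_left]
  constructor
  · rintro h _ hs ⟨d, hd, b, hb, rfl⟩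
    exact h ⟨_, hs, b, hb, add_sub_cancel_right d b⟩ hd
  · rintro h _ ⟨x, hx, b, hb, rfl⟩ hd
    exact h hx ⟨_, hd, b, hb, sub_add_cancel x b⟩

theorem interior_compl_add_sub_eq_empty [TopologicalSpace G] {s : Set G} (hs : Dense s)
    (t : Set G) : interior ((s + t)ᶜ - t) = ∅ := by
  have hdisj : Disjoint ((s + t)ᶜ - t) s :=
    disjoint_sub_iff_disjoint_add.2 disjoint_compl_left
  exact interior_eq_empty_iff_dense_compl.2 (hs.mono hdisj.subset_compl_left)

end Pointwise

/-- The Steinhaus property of a family `I` of small sets: the difference set of two measurable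
sets outside `I` has nonempty interior. The ambient σ-algebra is arbitrary; for the Borel
σ-algebra of `ℝ` this is the Steinhaus clause of `StandingIdeal`. -/
def HasSteinhausProperty {G : Type*} [Sub G] [TopologicalSpace G] [MeasurableSpace G]
    (I : Set (Set G)) : Prop :=
  ∀ A B : Set G, MeasurableSet A → MeasurableSet B → A ∉ I → B ∉ I → (interior (A - B)).Nonempty

theorem StandingIdeal.hasSteinhausProperty {I : Set (Set ℝ)} (hI : StandingIdeal I) :
    HasSteinhausProperty I :=
  hI.2.2.2.2.2

theorem stmt_0_general {G : Type*} [AddGroup G] [TopologicalSpace G] [MeasurableSpace G]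
    [MeasurableConstVAdd G G] {I : Set (Set G)} (hI : HasSteinhausProperty I)
    {B : Set G} (hB : MeasurableSet B) (hBI : B ∉ I)
    {D : Set G} (hDc : D.Countable) (hDd : Dense D) :
    (D + B)ᶜ ∈ I := by
  by_contra hCI
  have hC : MeasurableSet (D + B)ᶜ := (measurableSet_vadd_of_countable hDc hB).compl
  exact (hI _ B hC hB hCI hBI).ne_empty (interior_compl_add_sub_eq_empty hDd B)

theorem stmt_0 (I : Set (Set ℝ)) (hI : StandingIdeal I)
    (B : Set ℝ) (hB : MeasurableSet B) (hBI : B ∉ I)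
    (D : Set ℝ) (hDc : D.Countable) (hDd : Dense D) :
    (B + D)ᶜ ∈ I := by
  rw [add_comm B D]
  exact stmt_0_general hI.hasSteinhausProperty hB hBI hDc hDd
end

section
/- Assume CH. Let I be a σ-ideal on ℝ satisfying the standing assumptions (ℝ ∉ I, translation invariance, scale invariance, Borel base, Steinhaus property). Then there exists a family of 𝔠-many pairwise disjoint strong I-Luzin subsets of ℝ whose union is all of ℝ (a partition of ℝ into 𝔠 strong I-Luzin sets). -/
open Cardinal MeasureTheory Set
open scoped Pointwise

/-!
Under CH both the Borel sets in `I` and the Borel sets outside `I` can be listed in type `ω₁`.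
A transfinite recursion picks distinct points `p d`, where `p d` lies in a prescribed positive set
and avoids all earlier null sets; each pair (colour, positive set) is prescribed `ℵ₁` many times.
Colouring `p d` with the prescribed colour makes each colour class meet each positive set
uncountably often and each null set countably often. Giving the points never picked pairwise
distinct colours adds at most one point per class and makes the classes cover the space.

Every step of the recursion is possible because countable sets belong to `I`: by the Steinhaus
property singletons do, since `{x} - {x} = {0}` has empty interior.
-/

section Fibers

universe u

variable {α : Type u}

theorem exists_injective_forall_mem {ι : Type u} [LinearOrder ι] [WellFoundedLT ι]
    (A : ι → Set α) (hA : ∀ i, #(Iio i) < #(A i)) :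
    ∃ p : ι → α, Function.Injective p ∧ ∀ i, p i ∈ A i := by
  have exists_next (i : ι) (f : ∀ j, j < i → α) : ∃ x ∈ A i, ∀ j hj, x ≠ f j hj := by
    have hlt : #(range fun j : Iio i => f j j.2) < #(A i) := mk_range_le.trans_lt (hA i)
    obtain ⟨x, hxA, hx⟩ := sdiff_nonempty_of_mk_lt_mk hlt
    exact ⟨x, hxA, fun j hj hxj => hx ⟨⟨j, hj⟩, hxj.symm⟩⟩
  choose next next_mem next_ne using exists_next
  let p : ι → α := WellFoundedLT.fix next
  have hp (i : ι) : p i = next i fun j _ => p j := WellFoundedLT.fix_eq next i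
  have p_ne {i j : ι} (hij : i < j) : p j ≠ p i := by
    rw [hp j]
    exact next_ne j _ i hij
  refine ⟨p, fun i j hij => ?_, fun i => hp i ▸ next_mem i _⟩
  rcases lt_trichotomy i j with hlt | heq | hgt
  · exact absurd hij.symm (p_ne hlt)
  · exact heq
  · exact absurd hij (p_ne hgt)

theorem exists_forall_mk_fiber_inter [Infinite α] (N P : α → Set α)
    (hP : ∀ i (s : Set α), #s < #α → #α ≤ #(P i \ ⋃ j ∈ s, N j : Set α)) :
    ∃ g : α → α, ∀ y, (∀ j, #(g ⁻¹' {y} ∩ N j : Set α) < #α) ∧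
      ∀ i, #(g ⁻¹' {y} ∩ P i : Set α) = #α := by
  obtain ⟨_, _, hord⟩ := exists_ord_eq_type_lt α
  -- `e d` lists a colour, the index of a positive set, and a label that makes every pair recur.
  obtain ⟨e⟩ : Nonempty (α ≃ α × α × α) := by
    rw [← Cardinal.eq]
    simp only [mk_prod, lift_id, mul_eq_self (aleph0_le_mk α)]
  obtain ⟨p, hp, hpmem⟩ := exists_injective_forall_mem
    (fun d => P (e d).2.1 \ ⋃ j ∈ Iio d, N j)
    fun d => (mk_Iio_lt d hord).trans_le (hP _ _ (mk_Iio_lt d hord))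
  let g : α → α := Function.extend p (fun d => (e d).1) id
  have g_p (d : α) : g (p d) = (e d).1 := hp.extend_apply _ _ d
  refine ⟨g, fun y => ⟨fun j => ?_, fun i => ?_⟩⟩
  · have hsub : g ⁻¹' {y} ∩ N j ⊆ insert y (p '' Iic j) := by
      rintro x ⟨hxy, hxN⟩
      by_cases hx : ∃ d, p d = x
      · obtain ⟨d, rfl⟩ := hx
        have hdj : ¬ j < d := fun hjd => (hpmem d).2 (mem_biUnion hjd hxN)
        exact Or.inr ⟨d, not_lt.1 hdj, rfl⟩
      · exact Or.inl ((Function.extend_apply' _ _ _ hx).symm.trans hxy)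
    calc #(g ⁻¹' {y} ∩ N j : Set α)
        ≤ #(p '' Iic j) + 1 := (mk_le_mk_of_subset hsub).trans mk_insert_le
      _ ≤ #(Iic j) + 1 := by gcongr; exact mk_image_le
      _ < #α := add_one_lt_of_lt (aleph0_le_mk α) (mk_Iic_lt j hord (aleph0_le_mk α))
  · let q (k : α) : α := p (e.symm (y, i, k))
    have hq : Function.Injective q := fun k k' hkk' => by
      simpa using e.symm.injective (hp hkk')
    have hqmem (k : α) : q k ∈ g ⁻¹' {y} ∩ P i :=
      ⟨by simp [q, g_p], by simpa using (hpmem (e.symm (y, i, k))).1⟩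
    exact le_antisymm (mk_set_le _)
      (mk_le_of_injective (f := fun k => (⟨q k, hqmem k⟩ : ↥(g ⁻¹' {y} ∩ P i)))
        fun k k' h => hq (congrArg Subtype.val h))

theorem exists_range_eq_of_mk_le {β : Type u} {s : Set β} (hs : s.Nonempty) (h : #s ≤ #α) :
    ∃ f : α → β, range f = s := by
  obtain ⟨f, hf⟩ := Function.exists_surjective_iff.2 ⟨⟨fun _ : α => hs.to_subtype.some⟩, h⟩
  exact ⟨Subtype.val ∘ f, by rw [hf.range_comp, Subtype.range_val]⟩

theorem exists_forall_mk_fiber_inter_of_mk_le [Infinite α] {𝒩 ℬ : Set (Set α)}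
    (hne𝒩 : 𝒩.Nonempty) (h𝒩 : #𝒩 ≤ #α) (hneℬ : ℬ.Nonempty) (hℬ : #ℬ ≤ #α)
    (hdiff : ∀ B ∈ ℬ, ∀ 𝒞 ⊆ 𝒩, #𝒞 < #α → #α ≤ #(B \ ⋃₀ 𝒞 : Set α)) :
    ∃ g : α → α, ∀ y, (∀ s ∈ 𝒩, #(g ⁻¹' {y} ∩ s : Set α) < #α) ∧
      ∀ B ∈ ℬ, #(g ⁻¹' {y} ∩ B : Set α) = #α := by
  obtain ⟨N, rfl⟩ := exists_range_eq_of_mk_le hne𝒩 h𝒩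
  obtain ⟨P, rfl⟩ := exists_range_eq_of_mk_le hneℬ hℬ
  simp only [forall_mem_range] at hdiff ⊢
  refine exists_forall_mk_fiber_inter N P fun i s hs => ?_
  rw [← sUnion_image]
  exact hdiff i (N '' s) (image_subset_range N s) (mk_image_le.trans_lt hs)

theorem mk_setOf_measurableSet_le_continuum [m : MeasurableSpace α]
    [MeasurableSpace.CountablyGenerated α] : #{s : Set α | MeasurableSet s} ≤ 𝔠 := by
  obtain ⟨b, hb, rfl⟩ := ‹MeasurableSpace.CountablyGenerated α›.isCountablyGenerated
  exact MeasurableSpace.cardinal_measurableSet_le_continuum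
    (hb.le_aleph0.trans aleph0_le_continuum)

theorem mk_le_continuum_of_countablyGenerated [MeasurableSpace α]
    [MeasurableSpace.CountablyGenerated α] [MeasurableSingletonClass α] : #α ≤ 𝔠 :=
  (mk_le_of_injective (f := fun x : α => (⟨{x}, .singleton x⟩ : {s : Set α | MeasurableSet s}))
    fun _ _ h => singleton_injective (congrArg Subtype.val h)).trans
    mk_setOf_measurableSet_le_continuum

end Fibers

section Filter

open Filter

universe u

variable {α : Type u} {l : Filter α}

theorem compl_mem_of_countable_of_le_cofinite [CountableInterFilter l] (hl : l ≤ cofinite)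
    {C : Set α} (hC : C.Countable) : Cᶜ ∈ l := by
  have hne : ∀ᶠ x in l, ∀ c ∈ C, x ≠ c :=
    (eventually_countable_ball hC).2 fun c _ => le_cofinite_iff_eventually_ne.1 hl c
  exact hne.mono fun x hx hxC => hx x hxC rfl

theorem uncountable_of_le_cofinite [l.NeBot] [CountableInterFilter l] (hl : l ≤ cofinite) :
    Uncountable α := by
  by_contra h
  have : Countable α := not_uncountable_iff.1 h
  have hempty := compl_mem_of_countable_of_le_cofinite hl (countable_univ (α := α))
  exact l.empty_notMem (compl_univ ▸ hempty)

theorem not_countable_sdiff_of_frequently [CountableInterFilter l] (hl : l ≤ cofinite)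
    {B t : Set α} (hB : ∃ᶠ x in l, x ∈ B) (ht : tᶜ ∈ l) : ¬ (B \ t).Countable := by
  intro hC
  obtain ⟨x, hxB, hxt, hx⟩ :=
    (hB.and_eventually (inter_mem ht (compl_mem_of_countable_of_le_cofinite hl hC))).exists
  exact hx ⟨hxB, hxt⟩

/-- Strong Luzin sets for the σ-ideal `{s | sᶜ ∈ l}`, encoded by its dual filter `l`: a set lies
outside the σ-ideal if and only if it is met frequently along `l`. -/
structure IsStrongLuzinAlong [MeasurableSpace α] (l : Filter α) (L : Set α) : Prop where
  mk_eq : #L = 𝔠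
  countable_sdiff : ∀ s ∈ l, (L \ s).Countable
  not_countable_inter : ∀ B, MeasurableSet B → (∃ᶠ x in l, x ∈ B) → ¬ (L ∩ B).Countable

variable [MeasurableSpace α] [MeasurableSpace.CountablyGenerated α] [MeasurableSingletonClass α]
  [l.NeBot] [CountableInterFilter l]

theorem mk_eq_continuum_of_le_cofinite (hCH : 𝔠 = (ℵ₁ : Cardinal.{u})) (hl : l ≤ cofinite) :
    #α = 𝔠 :=
  have := uncountable_of_le_cofinite hl
  le_antisymm mk_le_continuum_of_countablyGenerated
    (hCH.trans_le (aleph_one_le_iff.2 aleph0_lt_mk))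

theorem exists_forall_isStrongLuzinAlong_fiber [l.IsMeasurablyGenerated]
    (hCH : 𝔠 = (ℵ₁ : Cardinal.{u})) (hl : l ≤ cofinite) :
    ∃ g : α → α, ∀ y, IsStrongLuzinAlong l (g ⁻¹' {y}) := by
  have hα : #α = 𝔠 := mk_eq_continuum_of_le_cofinite hCH hl
  have := uncountable_of_le_cofinite hl
  have countable_iff {β : Type u} (s : Set β) : s.Countable ↔ #s < #α := by
    rw [hα, hCH, lt_aleph_one_iff, le_aleph0_iff_set_countable]
  have mk_le {𝒮 : Set (Set α)} (h𝒮 : 𝒮 ⊆ {s | MeasurableSet s}) : #𝒮 ≤ #α :=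
    hα ▸ (mk_le_mk_of_subset h𝒮).trans mk_setOf_measurableSet_le_continuum
  have huniv : ∃ᶠ x in l, x ∈ (Set.univ : Set α) := Frequently.of_forall mem_univ
  let 𝒩 : Set (Set α) := {s | MeasurableSet s ∧ sᶜ ∈ l}
  let ℬ : Set (Set α) := {B | MeasurableSet B ∧ ∃ᶠ x in l, x ∈ B}
  obtain ⟨g, hg⟩ : ∃ g : α → α, ∀ y, (∀ s ∈ 𝒩, #(g ⁻¹' {y} ∩ s : Set α) < #α) ∧
      ∀ B ∈ ℬ, #(g ⁻¹' {y} ∩ B : Set α) = #α := by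
    refine exists_forall_mk_fiber_inter_of_mk_le ⟨∅, .empty, by simp⟩ (mk_le fun _ h => h.1)
      ⟨Set.univ, .univ, huniv⟩ (mk_le fun _ h => h.1) fun B hB 𝒞 h𝒞 hcard => ?_
    have hnull : (⋃₀ 𝒞)ᶜ ∈ l := by
      rw [sUnion_eq_biUnion, compl_iUnion₂, countable_bInter_mem ((countable_iff 𝒞).2 hcard)]
      exact fun s hs => (h𝒞 hs).2
    rw [← not_lt, ← countable_iff]
    exact not_countable_sdiff_of_frequently hl hB.2 hnull
  refine ⟨g, fun y => ⟨?_, fun s hs => ?_, fun B hB hBl => ?_⟩⟩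
  · rw [← hα, ← (hg y).2 Set.univ ⟨.univ, huniv⟩, inter_univ]
  · obtain ⟨t, htl, ht, hts⟩ := IsMeasurablyGenerated.exists_measurable_subset hs
    have htc : (g ⁻¹' {y} ∩ tᶜ).Countable :=
      (countable_iff _).2 ((hg y).1 tᶜ ⟨ht.compl, by rwa [compl_compl]⟩)
    exact htc.mono (inter_subset_inter_right _ (compl_subset_compl.2 hts))
  · rw [countable_iff, (hg y).2 B ⟨hB, hBl⟩]
    exact lt_irrefl _

theorem stmt_2_general {α : Type u} [MeasurableSpace α] [MeasurableSpace.CountablyGenerated α]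
    [MeasurableSingletonClass α] (l : Filter α) [l.NeBot] [CountableInterFilter l]
    [l.IsMeasurablyGenerated] (hCH : 𝔠 = (ℵ₁ : Cardinal.{u})) (hl : l ≤ cofinite) :
    ∃ F : Set (Set α), #F = 𝔠 ∧ (∀ L ∈ F, IsStrongLuzinAlong l L) ∧
      F.PairwiseDisjoint id ∧ ⋃₀ F = Set.univ := by
  obtain ⟨g, hg⟩ := exists_forall_isStrongLuzinAlong_fiber hCH hl
  have g_surjective : Function.Surjective g := fun y => by
    have hne : #(g ⁻¹' {y}) ≠ 0 := (hg y).mk_eq.trans_ne continuum_ne_zero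
    obtain ⟨x, hx⟩ := nonempty_coe_sort.1 (mk_ne_zero_iff.1 hne)
    exact ⟨x, hx⟩
  have fiber_injective : Function.Injective fun y => g ⁻¹' {y} :=
    g_surjective.preimage_injective.comp singleton_injective
  refine ⟨range fun y => g ⁻¹' {y}, ?_, forall_mem_range.2 hg,
    (pairwise_disjoint_fiber g).range_pairwise, eq_univ_of_forall fun x => ⟨_, ⟨g x, rfl⟩, rfl⟩⟩
  rw [mk_range_eq _ fiber_injective]
  exact mk_eq_continuum_of_le_cofinite hCH hl

end Filter

section SigmaIdeal

variable {I : Set (Set ℝ)}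

theorem IsSigmaIdeal.sUnion_mem (hI : IsSigmaIdeal I) {S : Set (Set ℝ)} (hS : S.Countable)
    (hSI : S ⊆ I) : ⋃₀ S ∈ I := by
  obtain ⟨hempty, -, hUnion⟩ := hI
  rcases S.eq_empty_or_nonempty with rfl | hne
  · rwa [sUnion_empty]
  · obtain ⟨f, rfl⟩ := hS.exists_eq_range hne
    rw [sUnion_range]
    exact hUnion f fun n => hSI ⟨n, rfl⟩

/-- The filter of complements of members of a σ-ideal, which carries statements about the σ-ideal
into filter language. -/
def IsSigmaIdeal.dualFilter (hI : IsSigmaIdeal I) : Filter ℝ :=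
  .ofCountableUnion I (fun _ => hI.sUnion_mem) fun t ht s hst => hI.2.1 s t hst ht

theorem IsSigmaIdeal.mem_dualFilter (hI : IsSigmaIdeal I) {s : Set ℝ} :
    s ∈ hI.dualFilter ↔ sᶜ ∈ I :=
  Filter.mem_ofCountableUnion

instance IsSigmaIdeal.countableInterFilter_dualFilter (hI : IsSigmaIdeal I) :
    CountableInterFilter hI.dualFilter :=
  Filter.countableInter_ofCountableUnion ..

theorem IsSigmaIdeal.frequently_dualFilter (hI : IsSigmaIdeal I) {B : Set ℝ} :
    (∃ᶠ x in hI.dualFilter, x ∈ B) ↔ B ∉ I := by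
  change Bᶜ ∉ hI.dualFilter ↔ B ∉ I
  rw [hI.mem_dualFilter, compl_compl]

theorem IsStrongLuzinAlong.isStrongLuzinFor {hI : IsSigmaIdeal I} {L : Set ℝ}
    (hL : IsStrongLuzinAlong hI.dualFilter L) : IsStrongLuzinFor I L := by
  refine ⟨⟨hL.mk_eq, fun S hS => ?_⟩, fun B hB hBI =>
    hL.not_countable_inter B hB (hI.frequently_dualFilter.2 hBI)⟩
  simpa only [sdiff_compl] using
    hL.countable_sdiff Sᶜ (hI.mem_dualFilter.2 (by rwa [compl_compl]))

theorem StandingIdeal.isSigmaIdeal (hI : StandingIdeal I) : IsSigmaIdeal I :=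
  hI.1

theorem StandingIdeal.singleton_mem (hI : StandingIdeal I) (x : ℝ) : {x} ∈ I := by
  obtain ⟨-, -, -, -, -, steinhaus⟩ := hI
  by_contra hx
  simpa using steinhaus {x} {x} (.singleton x) (.singleton x) hx hx

theorem StandingIdeal.dualFilter_le_cofinite (hI : StandingIdeal I) :
    hI.isSigmaIdeal.dualFilter ≤ Filter.cofinite :=
  Filter.le_cofinite_iff_compl_singleton_mem.2 fun x =>
    hI.isSigmaIdeal.mem_dualFilter.2 (by simpa only [compl_compl] using hI.singleton_mem x)

theorem StandingIdeal.neBot_dualFilter (hI : StandingIdeal I) :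
    hI.isSigmaIdeal.dualFilter.NeBot := by
  rw [Filter.neBot_iff, Ne, ← Filter.empty_mem_iff_bot, hI.isSigmaIdeal.mem_dualFilter, compl_empty]
  exact hI.2.1

theorem StandingIdeal.isMeasurablyGenerated_dualFilter (hI : StandingIdeal I) :
    hI.isSigmaIdeal.dualFilter.IsMeasurablyGenerated := by
  obtain ⟨hσ, -, -, -, borelBase, -⟩ := hI
  refine ⟨fun s hs => ?_⟩
  obtain ⟨B, hBI, hB, hsB⟩ := borelBase sᶜ (hσ.mem_dualFilter.1 hs)
  exact ⟨Bᶜ, hσ.mem_dualFilter.2 (by rwa [compl_compl]), hB.compl, compl_subset_comm.1 hsB⟩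

end SigmaIdeal

theorem continuum_eq_aleph_one_of_universe.{u, v} (h : 𝔠 = (ℵ₁ : Cardinal.{u})) :
    𝔠 = (ℵ₁ : Cardinal.{v}) := by
  apply lift_injective.{u}
  rw [lift_continuum, ← lift_continuum.{v, u}, h]
  simp only [lift_aleph, Ordinal.lift_one]

theorem stmt_2 (hCH : Cardinal.continuum = Cardinal.aleph 1)
    (I : Set (Set ℝ)) (hI : StandingIdeal I) :
    ∃ F : Set (Set ℝ), Cardinal.mk F = Cardinal.continuum ∧
      (∀ L ∈ F, IsStrongLuzinFor I L) ∧
      F.PairwiseDisjoint id ∧ ⋃₀ F = Set.univ := by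
  have := hI.neBot_dualFilter
  have := hI.isMeasurablyGenerated_dualFilter
  obtain ⟨F, hF, hLuzin, hpartition⟩ :=
    stmt_2_general hI.isSigmaIdeal.dualFilter (continuum_eq_aleph_one_of_universe hCH)
      hI.dualFilter_le_cofinite
  exact ⟨F, hF, fun L hL => (hLuzin L hL).isStrongLuzinFor, hpartition⟩
end

section
/- Assume CH. Then there exists a set A ⊆ ℝ² such that for every x ∈ ℝ the vertical slice A_x is co-countable in ℝ (its complement ℝ \ A_x is countable), and A is both completely 𝓜-nonmeasurable and completely 𝓝-nonmeasurable. -/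
open Cardinal MeasureTheory Set
open scoped Pointwise

open Filter Function Topology
open scoped ENNReal

/-!
A Borel set `B` in the plane that is non-meagre or of positive measure has uncountable projection
to the first coordinate. This projection is analytic, hence of cardinality `𝔠` by the perfect set
theorem, and there are only `𝔠` Borel sets. A transfinite recursion of length `𝔠` therefore picks
two points of each such `B` in such a way that no two of the chosen points lie on a common vertical
line. Removing one of the two points for every `B` from the plane leaves a set that splits each `B`
and omits at most one point of each vertical line.
-/

section Selection

universe u v w

theorem exists_forall_mem_injective_comp {ι : Type u} {α : Type v} {β : Type w} (f : α → β)
    (B : ι → Set α) (hB : ∀ i, lift.{w} #ι ≤ lift.{u} #(f '' B i)) :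
    ∃ p : ι → α, (∀ i, p i ∈ B i) ∧ Injective (f ∘ p) := by
  obtain ⟨_, _, hord⟩ := exists_ord_eq_type_lt ι
  have exists_new_value (i : ι) (p : ∀ j, j < i → α) :
      ∃ a ∈ B i, ∀ j (hj : j < i), f (p j hj) ≠ f a := by
    have used_lt : lift.{u} #(range fun j : Iio i ↦ f (p j j.2)) < lift.{u} #(f '' B i) :=
      mk_range_le_lift.trans_lt ((lift_lt.2 (mk_Iio_lt i hord)).trans_le (hB i))
    obtain ⟨_, ⟨a, ha, rfl⟩, hnew⟩ := sdiff_nonempty_of_mk_lt_mk (lift_lt.1 used_lt)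
    exact ⟨a, ha, fun j hj h ↦ hnew ⟨⟨j, hj⟩, h⟩⟩
  choose next next_mem next_ne using exists_new_value
  let p : ι → α := wellFounded_lt.fix next
  have p_eq (i : ι) : p i = next i fun j _ ↦ p j := wellFounded_lt.fix_eq next i
  have p_ne {i j : ι} (hji : j < i) : f (p j) ≠ f (p i) :=
    p_eq i ▸ next_ne i (fun j _ ↦ p j) j hji
  refine ⟨p, fun i ↦ p_eq i ▸ next_mem i _, fun i j hij ↦ ?_⟩
  by_contra hne
  rcases lt_or_gt_of_ne hne with hlt | hgt
  exacts [p_ne hlt hij, p_ne hgt hij.symm]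

/-- `A` splits `B` if `B` meets both `A` and its complement. A set is completely nonmeasurable with
respect to a σ-ideal if it splits every Borel set outside the ideal. -/
def Splits {α : Type*} (A B : Set α) : Prop :=
  (A ∩ B).Nonempty ∧ ¬ B ⊆ A

theorem exists_subsingleton_compl_slices_forall_splits {X : Type u} {Y : Type v} {κ : Cardinal.{u}}
    (hκ : ℵ₀ ≤ κ) {𝓕 : Set (Set (X × Y))} (h𝓕 : #𝓕 ≤ lift.{v} κ)
    (hproj : ∀ B ∈ 𝓕, κ ≤ #(Prod.fst '' B)) :
    ∃ A : Set (X × Y), (∀ x, {y | (x, y) ∈ A}ᶜ.Subsingleton) ∧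
      ∀ B ∈ 𝓕, Splits A B := by
  have mk_le : #(𝓕 × Bool) ≤ lift.{v} κ := by
    rw [mk_prod, lift_uzero]
    exact mul_le_of_le (aleph0_le_lift.2 hκ) h𝓕
      ((lift_le_aleph0.2 mk_le_aleph0).trans (aleph0_le_lift.2 hκ))
  obtain ⟨p, p_mem, p_inj⟩ := exists_forall_mem_injective_comp Prod.fst
    (fun i : 𝓕 × Bool ↦ i.1.1) fun i ↦
      (lift_le.2 mk_le).trans (by simpa using hproj i.1 i.1.2)
  refine ⟨(range fun B ↦ p (B, true))ᶜ, ?_, fun B hB ↦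
    ⟨⟨p (⟨B, hB⟩, false), ?_, p_mem (⟨B, hB⟩, false)⟩, ?_⟩⟩
  · simp only [Set.Subsingleton, mem_compl_iff, mem_ofPred_eq, not_not]
    rintro x y ⟨B, hB⟩ z ⟨C, hC⟩
    have hBC : (B, true) = (C, true) := p_inj (by simp [hB, hC])
    simpa [hBC, hC, eq_comm] using hB
  · rintro ⟨C, hC⟩
    simpa using p_inj (congrArg Prod.fst hC)
  · exact fun hsub ↦ hsub (p_mem (⟨B, hB⟩, true)) ⟨⟨B, hB⟩, rfl⟩

end Selection

section PerfectSet

variable {X Y : Type*}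

/-- `x` is a condensation point of `C` as seen through `f`: the part of `C` in any neighbourhood of
`x` has uncountable image. For `f = id` these are the usual condensation points of `C`. -/
def IsImageCondensationPt [TopologicalSpace X] (f : X → Y) (C : Set X) (x : X) : Prop :=
  ∀ U ∈ 𝓝 x, ¬ (f '' (U ∩ C)).Countable

theorem countable_image_not_isImageCondensationPt [TopologicalSpace X] [SecondCountableTopology X]
    (f : X → Y) (C : Set X) : (f '' {x ∈ C | ¬ IsImageCondensationPt f C x}).Countable := by
  have exists_nhd (x : X) (hx : ¬ IsImageCondensationPt f C x) :
      ∃ U ∈ 𝓝 x, (f '' (U ∩ C)).Countable := by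
    simpa [IsImageCondensationPt] using hx
  choose! U U_mem_nhds U_countable using exists_nhd
  obtain ⟨t, ht, ht_countable, hcover⟩ := TopologicalSpace.countable_cover_nhdsWithin
    (s := {x ∈ C | ¬ IsImageCondensationPt f C x}) fun x hx ↦
      mem_nhdsWithin_of_mem_nhds (U_mem_nhds x hx.2)
  refine (ht_countable.biUnion fun x hx ↦ U_countable x (ht hx).2).mono ?_
  rintro _ ⟨x, hx, rfl⟩
  obtain ⟨z, hz, hxz⟩ := mem_iUnion₂.1 (hcover hx)
  exact mem_biUnion hz ⟨x, ⟨hxz, hx.1⟩, rfl⟩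

theorem exists_isImageCondensationPt_pair [TopologicalSpace X] [SecondCountableTopology X]
    {f : X → Y} {C : Set X} (hC : ¬ (f '' C).Countable) :
    ∃ x : Bool → X, Injective (f ∘ x) ∧ ∀ b, IsImageCondensationPt f C (x b) := by
  have not_countable : ¬ (f '' {x | IsImageCondensationPt f C x}).Countable := fun h ↦
    hC <| (h.union (countable_image_not_isImageCondensationPt f C)).mono <| by
      rw [← image_union]
      exact image_mono fun x hx ↦ (em _).imp id fun hx' ↦ ⟨hx, hx'⟩
  obtain ⟨_, ⟨x, hx, rfl⟩, _, ⟨y, hy, rfl⟩, hne⟩ :=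
    not_subsingleton_iff.1 (mt Set.Subsingleton.countable not_countable)
  exact ⟨fun b ↦ bif b then x else y, by simp [Injective, hne, hne.symm],
    Bool.forall_bool.2 ⟨hy, hx⟩⟩

theorem exists_isClosed_splitting_image [PseudoEMetricSpace X] [SecondCountableTopology X]
    [TopologicalSpace Y] [T2Space Y] {f : X → Y} (hf : Continuous f) {C : Set X}
    (hC_closed : IsClosed C) (hC : ¬ (f '' C).Countable) {ε : ℝ≥0∞} (hε : 0 < ε) :
    ∃ D : Bool → Set X, (∀ b, IsClosed (D b)) ∧ (∀ b, ¬ (f '' D b).Countable) ∧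
      (∀ b, D b ⊆ C) ∧ (∀ b, Metric.ediam (D b) ≤ ε) ∧ Pairwise (Disjoint on fun b ↦ f '' D b) := by
  obtain ⟨x, hx_inj, hx⟩ := exists_isImageCondensationPt_pair hC
  obtain ⟨V, V_mem_nhds, V_disjoint⟩ :=
    (pairwise_disjoint_nhds.comp_of_injective hx_inj).exists_mem_filter_of_disjoint
  have exists_closed_nhd (b : Bool) : ∃ N ∈ 𝓝 (x b), IsClosed N ∧
      N ⊆ f ⁻¹' V b ∩ Metric.closedEBall (x b) (ε / 2) :=
    exists_mem_nhds_isClosed_subset <| inter_mem (hf.continuousAt (V_mem_nhds b)) <|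
      Metric.closedEBall_mem_nhds _ (ENNReal.half_pos hε.ne')
  choose N N_mem_nhds N_closed hN using exists_closed_nhd
  refine ⟨fun b ↦ N b ∩ C, fun b ↦ (N_closed b).inter hC_closed, fun b ↦ hx b _ (N_mem_nhds b),
    fun b ↦ inter_subset_right, fun b ↦ ?_, fun a b hab ↦ ?_⟩
  · calc Metric.ediam (N b ∩ C) ≤ Metric.ediam (Metric.closedEBall (x b) (ε / 2)) :=
          Metric.ediam_mono fun y hy ↦ (hN b hy.1).2
      _ ≤ 2 * (ε / 2) := Metric.ediam_closedEBall_le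
      _ = ε := ENNReal.mul_div_cancel two_ne_zero ENNReal.ofNat_ne_top
  · exact (V_disjoint hab).mono (image_subset_iff.2 fun y hy ↦ (hN a hy.1).1)
      (image_subset_iff.2 fun y hy ↦ (hN b hy.1).1)

theorem exists_cantorScheme_of_not_countable_range [PseudoMetricSpace X] [SecondCountableTopology X]
    [TopologicalSpace Y] [T2Space Y] {f : X → Y} (hf : Continuous f) (h : ¬ (range f).Countable) :
    ∃ D : List Bool → Set X, CantorScheme.ClosureAntitone D ∧ CantorScheme.VanishingDiam D ∧
      (∀ l, (D l).Nonempty) ∧ CantorScheme.Disjoint fun l ↦ f '' D l := by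
  obtain ⟨ε, -, hε, ε_tendsto⟩ := exists_seq_strictAnti_tendsto' (zero_lt_one' ℝ≥0∞)
  choose child child_closed child_unc child_subset child_ediam child_disjoint using
    fun (C : {C : Set X // IsClosed C ∧ ¬ (f '' C).Countable}) (n : ℕ) ↦
      exists_isClosed_splitting_image hf C.2.1 C.2.2 (hε n).1
  let D : List Bool → {C : Set X // IsClosed C ∧ ¬ (f '' C).Countable} :=
    List.rec ⟨univ, isClosed_univ, by rwa [image_univ]⟩ fun b l C ↦
      ⟨child C l.length b, child_closed C l.length b, child_unc C l.length b⟩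
  have D_antitone : CantorScheme.Antitone fun l ↦ (D l).1 :=
    fun l ↦ child_subset (D l) l.length
  refine ⟨fun l ↦ (D l).1, D_antitone.closureAntitone fun l ↦ (D l).2.1, fun x ↦ ?_, fun l ↦ ?_,
    fun l ↦ child_disjoint (D l) l.length⟩
  · refine (tendsto_add_atTop_iff_nat 1).1 <|
      tendsto_of_tendsto_of_tendsto_of_le_of_le tendsto_const_nhds ε_tendsto
        (fun _ ↦ zero_le) fun n ↦ ?_
    calc Metric.ediam (D (PiNat.res x (n + 1))).1
      _ ≤ ε (PiNat.res x n).length := child_ediam (D (PiNat.res x n)) _ (x n)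
      _ = ε n := by rw [PiNat.res_length]
  · exact nonempty_iff_ne_empty.2 fun hl ↦ (D l).2.2 (by simp [hl])

theorem injective_of_mem_disjoint_cantorScheme {β : Type*} {E : List β → Set Y}
    (hE : CantorScheme.Disjoint E) {g : (ℕ → β) → Y} (hg : ∀ x n, g x ∈ E (PiNat.res x n)) :
    Injective g := by
  refine fun x y hxy ↦ PiNat.res_injective (funext fun n ↦ ?_)
  induction n with
  | zero => rfl
  | succ n ih =>
    have hx : g x ∈ E (x n :: PiNat.res x n) := hg x (n + 1)
    have hy : g x ∈ E (y n :: PiNat.res x n) := by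
      rw [hxy, ih]
      exact hg y (n + 1)
    have hxy_n : x n = y n := by
      by_contra hne
      exact (hE _ hne).ne_of_mem hx hy rfl
    rw [PiNat.res_succ, PiNat.res_succ, ih, hxy_n]

theorem exists_nat_bool_injection_of_not_countable_range [TopologicalSpace X] [PolishSpace X]
    [TopologicalSpace Y] [T2Space Y] {f : X → Y} (hf : Continuous f) (h : ¬ (range f).Countable) :
    ∃ g : (ℕ → Bool) → Y, range g ⊆ range f ∧ Continuous g ∧ Injective g := by
  let := TopologicalSpace.upgradeIsCompletelyMetrizable X
  obtain ⟨D, D_anti, D_diam, D_nonempty, D_disjoint⟩ :=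
    exists_cantorScheme_of_not_countable_range hf h
  have total (x : ℕ → Bool) : x ∈ (CantorScheme.inducedMap D).1 :=
    D_anti.map_of_vanishingDiam D_diam D_nonempty ▸ mem_univ x
  let φ (x : ℕ → Bool) : X := (CantorScheme.inducedMap D).2 ⟨x, total x⟩
  have φ_continuous : Continuous φ := D_diam.map_continuous.comp (by fun_prop)
  exact ⟨f ∘ φ, range_comp_subset_range φ f, hf.comp φ_continuous,
    injective_of_mem_disjoint_cantorScheme D_disjoint fun x n ↦
      mem_image_of_mem f (CantorScheme.map_mem ⟨x, total x⟩ n)⟩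

theorem continuum_le_mk_of_analyticSet [TopologicalSpace Y] [T2Space Y] {s : Set Y}
    (hs : AnalyticSet s) (h : ¬ s.Countable) : 𝔠 ≤ #s := by
  obtain ⟨X, _, _, f, hf, rfl⟩ := analyticSet_iff_exists_polishSpace_range.1 hs
  obtain ⟨g, hgf, -, hg⟩ := exists_nat_bool_injection_of_not_countable_range hf h
  calc 𝔠 = #(range g) := by simpa using (mk_range_eq_of_injective hg).symm
    _ ≤ #(range f) := mk_le_mk_of_subset hgf

end PerfectSet

section Borel

theorem mk_setOf_measurableSet_le_continuum_s3 (X : Type*) [MeasurableSpace X]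
    [MeasurableSpace.CountablyGenerated X] : #{B : Set X | MeasurableSet B} ≤ 𝔠 := by
  have h := MeasurableSpace.cardinal_measurableSet_le_continuum
    (s := MeasurableSpace.countableGeneratingSet X)
    ((le_aleph0_iff_set_countable.2
      MeasurableSpace.countable_countableGeneratingSet).trans aleph0_le_continuum)
  rwa [MeasurableSpace.generateFrom_countableGeneratingSet] at h

theorem exists_subsingleton_compl_slices_forall_measurableSet_splits (X Y : Type*)
    [MeasurableSpace X] [StandardBorelSpace X] [MeasurableSpace Y] [StandardBorelSpace Y] :
    ∃ A : Set (X × Y), (∀ x, {y | (x, y) ∈ A}ᶜ.Subsingleton) ∧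
      ∀ B, MeasurableSet B → ¬ (Prod.fst '' B).Countable → Splits A B := by
  let := upgradeStandardBorel X
  let 𝓕 : Set (Set (X × Y)) := {B | MeasurableSet B ∧ ¬ (Prod.fst '' B).Countable}
  have mk_family_le : #𝓕 ≤ 𝔠 :=
    (mk_le_mk_of_subset fun B hB ↦ hB.1).trans (mk_setOf_measurableSet_le_continuum_s3 (X × Y))
  have continuum_le_mk_proj (B) (hB : B ∈ 𝓕) : 𝔠 ≤ #(Prod.fst '' B) :=
    continuum_le_mk_of_analyticSet (hB.1.analyticSet_image measurable_fst) hB.2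
  obtain ⟨A, hA, splits⟩ := exists_subsingleton_compl_slices_forall_splits aleph0_le_continuum
    (by rwa [lift_continuum]) continuum_le_mk_proj
  exact ⟨A, hA, fun B hB hproj ↦ splits B ⟨hB, hproj⟩⟩

variable {X Y : Type*}

theorem isMeagre_of_countable [TopologicalSpace X] [T1Space X] [∀ x : X, (𝓝[≠] x).NeBot]
    {s : Set X} (hs : s.Countable) : IsMeagre s := by
  rw [← biUnion_of_singleton s]
  refine isMeagre_biUnion hs fun x _ ↦ IsNowhereDense.isMeagre ?_
  rw [isClosed_singleton.isNowhereDense_iff, interior_singleton]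

theorem isMeagre_of_countable_image_fst [TopologicalSpace X] [T1Space X]
    [∀ x : X, (𝓝[≠] x).NeBot] [TopologicalSpace Y] {B : Set (X × Y)}
    (hB : (Prod.fst '' B).Countable) : IsMeagre B :=
  ((isMeagre_of_countable hB).preimage_of_isOpenMap continuous_fst isOpenMap_fst).mono
    (subset_preimage_image _ _)

theorem measure_prod_eq_zero_of_countable_image_fst [MeasurableSpace X] [MeasurableSpace Y]
    {μ : Measure X} [NullSingletonClass μ] {ν : Measure Y} [SFinite ν] {B : Set (X × Y)}
    (hB : (Prod.fst '' B).Countable) : μ.prod ν B = 0 :=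
  measure_mono_null (subset_preimage_image _ _)
    (Measure.quasiMeasurePreserving_fst.preimage_null (hB.measure_zero μ))

end Borel

theorem stmt_3_general :
    ∃ A : Set (ℝ × ℝ),
      (∀ x : ℝ, ({y : ℝ | (x, y) ∈ A}ᶜ).Subsingleton) ∧
      CompletelyMeagerNonmeasurable A ∧ CompletelyNullNonmeasurable A := by
  obtain ⟨A, hA, splits⟩ := exists_subsingleton_compl_slices_forall_measurableSet_splits ℝ ℝ
  refine ⟨A, hA, fun B hB hB_meagre ↦ splits B hB ?_, fun B hB hB_pos ↦ splits B hB ?_⟩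
  · exact mt isMeagre_of_countable_image_fst hB_meagre
  · exact mt measure_prod_eq_zero_of_countable_image_fst hB_pos.ne'

theorem stmt_3 (hCH : Cardinal.continuum = Cardinal.aleph 1) :
    ∃ A : Set (ℝ × ℝ),
      (∀ x : ℝ, ({y : ℝ | (x, y) ∈ A}ᶜ).Countable) ∧
      CompletelyMeagerNonmeasurable A ∧ CompletelyNullNonmeasurable A := by
  obtain ⟨A, hA, hA_nonmeasurable⟩ := stmt_3_general
  exact ⟨A, fun x ↦ (hA x).countable, hA_nonmeasurable⟩
end

section
/- Assume that a Luzin set exists. Then there exists a set A ⊆ ℝ² such that for every point p ∈ ℝ² and every nonzero vector v ∈ ℝ², the set {t ∈ ℝ : p + t·v ∈ A} is a strong Luzin set (i.e., the intersection of A with every straight line is a strong Luzin set under any affine parametrization of the line). -/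
open Cardinal MeasureTheory Set
open scoped Pointwise

/-! Let `L` be a Luzin set. The set `K = ℚ + L` still meets every meagre set in a countable set,
and it meets every nonempty open set in `𝔠` points, because countably many translates of such a
piece cover `L`. Both properties pass to `f ⁻¹' K` when `f` is a local homeomorphism off a countable
set of reals, for instance when `f` is a nonconstant polynomial; and together they make a set strong
Luzin, by the Baire property of Borel sets. A positive definite quadratic form `Q` restricts to a
quadratic polynomial on every line, so `A = Q ⁻¹' K` works. -/

section Topology

universe u v

variable {X : Type u} {Y : Type v} [TopologicalSpace X] [TopologicalSpace Y]

/-- The Luzin property of a set, without the requirement that the set have cardinality `𝔠`. -/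
def CountableOnMeagre (S : Set X) : Prop :=
  ∀ M : Set X, IsMeagre M → (S ∩ M).Countable

namespace CountableOnMeagre

lemma biUnion {ι : Type*} {I : Set ι} (hI : I.Countable) {S : ι → Set X}
    (hS : ∀ i ∈ I, CountableOnMeagre (S i)) : CountableOnMeagre (⋃ i ∈ I, S i) := by
  intro M hM
  rw [iUnion₂_inter]
  exact hI.biUnion fun i hi ↦ hS i hi M hM

lemma preimage_of_isEmbedding {K : Set Y} (hK : CountableOnMeagre K) {f : X → Y}
    (hf : Topology.IsEmbedding f) : CountableOnMeagre (f ⁻¹' K) := by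
  intro M hM
  refine ((hK _ (hf.isInducing.isMeagre_image hM)).preimage hf.injective).mono ?_
  exact fun x ⟨hxK, hxM⟩ ↦ ⟨hxK, mem_image_of_mem f hxM⟩

lemma preimage_inter_source {K : Set Y} (hK : CountableOnMeagre K) (e : OpenPartialHomeomorph X Y) :
    CountableOnMeagre (e ⁻¹' K ∩ e.source) := by
  intro M hM
  have hM' : IsMeagre ((↑) ⁻¹' M : Set e.source) :=
    hM.preimage_of_isOpenMap continuous_subtype_val e.open_source.isOpenMap_subtype_val
  have hcount := hK.preimage_of_isEmbedding e.isOpenEmbedding_restrict.isEmbedding _ hM'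
  refine (hcount.image (↑)).mono ?_
  exact fun x ⟨⟨hxK, hxe⟩, hxM⟩ ↦ ⟨⟨x, hxe⟩, ⟨hxK, hxM⟩, rfl⟩

lemma preimage_of_isLocalHomeomorphOn [SecondCountableTopology X] {K : Set Y}
    (hK : CountableOnMeagre K) {f : X → Y} {s : Set X} (hf : IsLocalHomeomorphOn f s)
    (hs : sᶜ.Countable) : CountableOnMeagre (f ⁻¹' K) := by
  intro M hM
  have hlocal : ∀ x ∈ s, ∃ V ∈ nhds x, (f ⁻¹' K ∩ V ∩ M).Countable := by
    intro x hx
    obtain ⟨e, hxe, rfl⟩ := hf x hx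
    exact ⟨e.source, e.open_source.mem_nhds hxe, hK.preimage_inter_source e M hM⟩
  choose! V hV hcount using hlocal
  obtain ⟨t, hts, ht, hcover⟩ :=
    TopologicalSpace.countable_cover_nhdsWithin fun x hx ↦ mem_nhdsWithin_of_mem_nhds (hV x hx)
  refine (hs.union (ht.biUnion fun x hx ↦ hcount x (hts hx))).mono ?_
  rintro x ⟨hxK, hxM⟩
  by_cases hxs : x ∈ s
  · obtain ⟨y, hyt, hxy⟩ := mem_iUnion₂.1 (hcover hxs)
    exact Or.inr (mem_biUnion hyt ⟨⟨hxK, hxy⟩, hxM⟩)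
  · exact Or.inl hxs

end CountableOnMeagre

/-- The set `S` is `𝔠`-dense: it meets every nonempty open set in at least `𝔠` points. -/
def ContinuumDense (S : Set X) : Prop :=
  ∀ U : Set X, IsOpen U → U.Nonempty → 𝔠 ≤ #(S ∩ U : Set X)

namespace ContinuumDense

lemma not_countable_inter {S : Set X} (hS : ContinuumDense S) {U : Set X} (hU : IsOpen U)
    (hne : U.Nonempty) : ¬ (S ∩ U).Countable := by
  rw [← Cardinal.le_aleph0_iff_set_countable, not_le]
  exact aleph0_lt_continuum.trans_le (hS U hU hne)

lemma preimage_of_isLocalHomeomorphOn {K : Set Y} (hK : ContinuumDense K) {f : X → Y} {s : Set X}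
    (hf : IsLocalHomeomorphOn f s) (hs : Dense s) : ContinuumDense (f ⁻¹' K) := by
  intro U hU hne
  obtain ⟨x, hxs, hxU⟩ := hs.exists_mem_open hU hne
  have hfU : f '' U ∈ nhds (f x) :=
    hf.map_nhds_eq hxs ▸ Filter.image_mem_map (hU.mem_nhds hxU)
  obtain ⟨V, hVU, hV, hxV⟩ := mem_nhds_iff.1 hfU
  have hsub : K ∩ V ⊆ f '' (f ⁻¹' K ∩ U) := by
    rw [image_preimage_inter]
    exact inter_subset_inter_right K hVU
  rw [← continuum_le_lift.{u, v}]
  calc 𝔠 ≤ lift.{u} #(K ∩ V : Set Y) := continuum_le_lift.2 (hK V hV ⟨f x, hxV⟩)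
    _ ≤ lift.{u} #(f '' (f ⁻¹' K ∩ U)) := lift_le.2 (mk_le_mk_of_subset hsub)
    _ ≤ lift.{v} #(f ⁻¹' K ∩ U : Set X) := mk_image_le_lift

end ContinuumDense

end Topology

section AddGroup

variable {G : Type*} [AddGroup G] [TopologicalSpace G] [SeparatelyContinuousAdd G]

lemma CountableOnMeagre.add_left {L : Set G} (hL : CountableOnMeagre L) {C : Set G}
    (hC : C.Countable) : CountableOnMeagre (C + L) := by
  rw [← iUnion_add_left_image]
  refine biUnion hC fun c _ ↦ ?_
  rw [image_add_left]
  exact hL.preimage_of_isEmbedding (Homeomorph.addLeft (-c)).isEmbedding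

lemma mk_le_mk_mul_mk_add_inter {D : Set G} (hD : Dense D) (L : Set G) {U : Set G} (hU : IsOpen U)
    (hne : U.Nonempty) : #L ≤ #D * #((D + L) ∩ U : Set G) := by
  have hsub : L ⊆ -D + ((D + L) ∩ U) := by
    intro x hx
    obtain ⟨d, hd, hdx⟩ := hD.exists_mem_open (hU.preimage (continuous_add_const x))
      (hne.preimage (add_right_surjective x))
    exact ⟨-d, neg_mem_neg.2 hd, d + x, ⟨add_mem_add hd hx, hdx⟩, neg_add_cancel_left d x⟩
  calc #L ≤ #(-D + ((D + L) ∩ U) : Set G) := mk_le_mk_of_subset hsub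
    _ ≤ #(-D : Set G) * #((D + L) ∩ U : Set G) := mk_add_le
    _ = #D * #((D + L) ∩ U : Set G) := by rw [mk_neg]

lemma ContinuumDense.add_left {L : Set G} (hL : 𝔠 ≤ #L) {D : Set G} (hDc : D.Countable)
    (hD : Dense D) : ContinuumDense (D + L) := by
  intro U hU hne
  by_contra! hlt
  have hD_lt : #D < 𝔠 := (Cardinal.le_aleph0_iff_set_countable.2 hDc).trans_lt aleph0_lt_continuum
  have hL_lt : #L < 𝔠 := (mk_le_mk_mul_mk_add_inter hD L hU hne).trans_lt
    (mul_lt_of_lt aleph0_le_continuum hD_lt hlt)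
  exact hL.not_gt hL_lt

end AddGroup

lemma IsLuzin.exists_countableOnMeagre_continuumDense {L : Set ℝ} (hL : IsLuzin L) :
    ∃ K : Set ℝ, CountableOnMeagre K ∧ ContinuumDense K :=
  ⟨range ((↑) : ℚ → ℝ) + L, CountableOnMeagre.add_left hL.2 (countable_range _),
    ContinuumDense.add_left hL.1.ge (countable_range _) Rat.denseRange_cast⟩

lemma CountableOnMeagre.isStrongLuzin {T : Set ℝ} (hT : CountableOnMeagre T)
    (hd : ContinuumDense T) : IsStrongLuzin T := by
  have hcard : #T = 𝔠 := by
    refine le_antisymm ((mk_set_le T).trans_eq mk_real) ?_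
    simpa only [inter_univ] using hd univ isOpen_univ univ_nonempty
  refine ⟨⟨hcard, hT⟩, fun B hB hBM hcount ↦ ?_⟩
  obtain ⟨U, hU, hBU⟩ := hB.residualEq_isOpen
  have hBU_meagre : IsMeagre (B \ U) := by
    filter_upwards [hBU.mem_iff] with x hx using fun h ↦ h.2 (hx.1 h.1)
  have hUB_meagre : IsMeagre (U \ B) := by
    filter_upwards [hBU.mem_iff] with x hx using fun h ↦ h.2 (hx.2 h.1)
  have hne : U.Nonempty := by
    rw [nonempty_iff_ne_empty]
    rintro rfl
    exact hBM (by simpa only [sdiff_empty] using hBU_meagre)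
  refine hd.not_countable_inter hU hne ((hcount.union (hT _ hUB_meagre)).mono ?_)
  rw [← inter_union_distrib_left, union_sdiff_self]
  exact inter_subset_inter_right T subset_union_right

lemma CountableOnMeagre.isStrongLuzin_preimage {K : Set ℝ} (hK : CountableOnMeagre K)
    (hd : ContinuumDense K) {f : ℝ → ℝ} {s : Set ℝ} (hf : IsLocalHomeomorphOn f s)
    (hs : sᶜ.Countable) : IsStrongLuzin (f ⁻¹' K) := by
  have hs_dense : Dense s := compl_compl s ▸ hs.dense_compl ℝ
  exact (hK.preimage_of_isLocalHomeomorphOn hf hs).isStrongLuzin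
    (hd.preimage_of_isLocalHomeomorphOn hf hs_dense)

lemma isLocalHomeomorphOn_of_hasStrictDerivAt {𝕜 : Type*} [NontriviallyNormedField 𝕜]
    [CompleteSpace 𝕜] {f f' : 𝕜 → 𝕜} {s : Set 𝕜} (hf : ∀ x ∈ s, HasStrictDerivAt f (f' x) x)
    (hf' : ∀ x ∈ s, f' x ≠ 0) : IsLocalHomeomorphOn f s := by
  intro x hx
  have hfx := (hf x hx).hasStrictFDerivAt_equiv (hf' x hx)
  exact ⟨hfx.toOpenPartialHomeomorph f, hfx.mem_toOpenPartialHomeomorph_source,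
    (hfx.toOpenPartialHomeomorph_coe).symm⟩

open Polynomial in
lemma CountableOnMeagre.isStrongLuzin_preimage_eval {K : Set ℝ} (hK : CountableOnMeagre K)
    (hd : ContinuumDense K) {P : ℝ[X]} (hP : P.natDegree ≠ 0) :
    IsStrongLuzin ((fun t ↦ P.eval t) ⁻¹' K) := by
  have hderiv : derivative P ≠ 0 := mt derivative_eq_zero.1 hP
  refine hK.isStrongLuzin_preimage hd (s := {t | (derivative P).eval t ≠ 0})
    (isLocalHomeomorphOn_of_hasStrictDerivAt (fun t _ ↦ P.hasStrictDerivAt t) fun t ht ↦ ht) ?_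
  refine ((derivative P).rootSet_finite ℝ).countable.mono fun t ht ↦ ?_
  rw [mem_rootSet_of_ne hderiv, coe_aeval_eq_eval]
  exact not_not.1 ht

section QuadraticForm

lemma exists_posDef_quadraticForm (R M : Type*) [CommRing R] [LinearOrder R]
    [IsStrictOrderedRing R] [AddCommGroup M] [Module R M] [Module.Free R M] :
    ∃ Q : QuadraticForm R M, Q.PosDef := by
  classical
  let b := Module.Free.chooseBasis R M
  have hsum (x : M) : b.toDual x x = ∑ i ∈ (b.repr x).support, b.repr x i * b.repr x i := by
    conv_lhs => enter [1, 2]; rw [← b.linearCombination_repr x]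
    simp only [Finsupp.linearCombination_apply, Finsupp.sum, map_sum, map_smul, LinearMap.sum_apply,
      LinearMap.smul_apply, Module.Basis.toDual_apply_right, smul_eq_mul]
  refine ⟨LinearMap.BilinMap.toQuadraticMap b.toDual, fun x hx ↦ ?_⟩
  rw [LinearMap.BilinMap.toQuadraticMap_apply, hsum]
  refine Finset.sum_pos (fun i hi ↦ mul_self_pos.2 (Finsupp.mem_support_iff.1 hi)) ?_
  rwa [Finsupp.support_nonempty_iff, b.repr.map_ne_zero_iff]

open Polynomial in
lemma quadraticForm_add_smul {R M : Type*} [CommRing R] [AddCommGroup M] [Module R M]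
    (Q : QuadraticForm R M) (p v : M) (t : R) :
    Q (p + t • v) = (C (Q v) * X ^ 2 + C (QuadraticMap.polar Q p v) * X + C (Q p)).eval t := by
  rw [QuadraticMap.map_add Q, QuadraticMap.map_smul, QuadraticMap.polar_smul_right]
  simp only [eval_add, eval_mul, eval_C, eval_pow, eval_X, smul_eq_mul]
  ring

end QuadraticForm

theorem stmt_5_general {E : Type*} [AddCommGroup E] [Module ℝ E] (hL : ∃ L : Set ℝ, IsLuzin L) :
    ∃ A : Set E, ∀ p v : E, v ≠ 0 → IsStrongLuzin {t : ℝ | p + t • v ∈ A} := by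
  obtain ⟨L, hL⟩ := hL
  obtain ⟨K, hK, hKd⟩ := hL.exists_countableOnMeagre_continuumDense
  obtain ⟨Q, hQ⟩ := exists_posDef_quadraticForm ℝ E
  refine ⟨Q ⁻¹' K, fun p v hv ↦ ?_⟩
  simp only [mem_preimage, quadraticForm_add_smul]
  refine hK.isStrongLuzin_preimage_eval hKd ?_
  rw [Polynomial.natDegree_quadratic (hQ v hv).ne']
  exact two_ne_zero

theorem stmt_5 (hL : ∃ L : Set ℝ, IsLuzin L) :
    ∃ A : Set (ℝ × ℝ), ∀ (p v : ℝ × ℝ), v ≠ 0 →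
      IsStrongLuzin {t : ℝ | p + t • v ∈ A} :=
  stmt_5_general hL
end

section
/- Let f, g : ℝ → ℝ² be topological embeddings (continuous injective maps that are homeomorphisms onto their images), and let M ⊆ ℝ be a closed nowhere dense set. Then g⁻¹(f(M)) is a meager subset of ℝ (equivalently, g(ℝ) ∩ f(M) is meager in the subspace g(ℝ)). -/
open Cardinal MeasureTheory Set
open scoped Pointwise

/-!
In a dense linear order a set with empty interior contains no nondegenerate interval, so it is
totally disconnected. On a compact set `K` a continuous injection `f` into a Hausdorff space is an
embedding, so `f '' K` is compact and totally disconnected, and its preimage under a continuous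
injection `g` is closed and totally disconnected. In a locally connected space without isolated
points such a preimage has empty interior. σ-compactness reduces the case of a meagre set to that of
countably many nowhere dense compact sets.
-/

section TotallyDisconnected

open scoped Topology

variable {X Y Z : Type*} [TopologicalSpace X] [TopologicalSpace Y] [TopologicalSpace Z]

theorem isTotallyDisconnected_of_interior_eq_empty [LinearOrder X] [OrderClosedTopology X]
    [DenselyOrdered X] {s : Set X} (hs : interior s = ∅) : IsTotallyDisconnected s := by
  intro t hts ht a ha b hb
  by_contra hab
  wlog hlt : a < b generalizing a b
  · exact this hb ha (Ne.symm hab) ((not_lt.mp hlt).lt_of_ne' hab)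
  have hIoo : Ioo a b ⊆ interior s :=
    interior_maximal (Ioo_subset_Icc_self.trans ((ht.Icc_subset ha hb).trans hts)) isOpen_Ioo
  exact ((nonempty_Ioo.mpr hlt).mono hIoo).ne_empty hs

theorem isTotallyDisconnected_image_of_isCompact [T2Space Y] {f : X → Y} {K : Set X}
    (hK : IsCompact K) (hd : IsTotallyDisconnected K) (hf : ContinuousOn f K) (hi : InjOn f K) :
    IsTotallyDisconnected (f '' K) := by
  have : CompactSpace K := isCompact_iff_compactSpace.mp hK
  have hemb : Topology.IsEmbedding (K.domRestrict f) :=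
    (hf.domRestrict.isClosedEmbedding hi.injective).isEmbedding
  rw [← range_domRestrict, hemb.isTotallyDisconnected_range]
  exact totallyDisconnectedSpace_subtype_iff.mpr hd

theorem isTotallyDisconnected_preimage {g : Z → Y} {D : Set Y} (hD : IsTotallyDisconnected D)
    (hg : Continuous g) (hi : g.Injective) : IsTotallyDisconnected (g ⁻¹' D) :=
  isTotallyDisconnected_of_image hg.continuousOn hi
    fun t ht ↦ hD t (ht.trans (image_preimage_subset g D))

theorem interior_eq_empty_of_isTotallyDisconnected [LocallyConnectedSpace Z]
    [∀ z : Z, (𝓝[≠] z).NeBot] {s : Set Z} (hs : IsTotallyDisconnected s) : interior s = ∅ := by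
  refine eq_empty_of_forall_notMem fun z hz ↦ ?_
  obtain ⟨V, hVs, hVo, hzV, hV⟩ := locallyConnectedSpace_iff_subsets_isOpen_isConnected.mp
    ‹_› z s (mem_interior_iff_mem_nhds.mp hz)
  have hVz : V = {z} := (hs V hVs hV.isPreconnected).eq_singleton_of_mem hzV
  exact Filter.NeBot.ne inferInstance ((isOpen_singleton_iff_punctured_nhds z).mp (hVz ▸ hVo))

theorem isNowhereDense_preimage_image_of_isCompact [T2Space Y] [LocallyConnectedSpace Z]
    [∀ z : Z, (𝓝[≠] z).NeBot] {f : X → Y} {g : Z → Y} {K : Set X} (hK : IsCompact K)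
    (hd : IsTotallyDisconnected K) (hf : ContinuousOn f K) (hfi : InjOn f K) (hg : Continuous g)
    (hgi : g.Injective) : IsNowhereDense (g ⁻¹' (f '' K)) := by
  have hclosed : IsClosed (g ⁻¹' (f '' K)) := (hK.image_of_continuousOn hf).isClosed.preimage hg
  have hfK : IsTotallyDisconnected (f '' K) :=
    isTotallyDisconnected_image_of_isCompact hK hd hf hfi
  exact hclosed.isNowhereDense_iff.mpr
    (interior_eq_empty_of_isTotallyDisconnected (isTotallyDisconnected_preimage hfK hg hgi))

end TotallyDisconnected

section MeagrePreimage

open scoped Topology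

variable {X Y Z : Type*}
  [TopologicalSpace X] [LinearOrder X] [OrderClosedTopology X] [DenselyOrdered X]
  [SigmaCompactSpace X] [TopologicalSpace Y] [T2Space Y]
  [TopologicalSpace Z] [LocallyConnectedSpace Z] [∀ z : Z, (𝓝[≠] z).NeBot]
  {f : X → Y} {g : Z → Y} {M : Set X}

theorem isMeagre_preimage_image_of_isNowhereDense (hM : IsNowhereDense M)
    (hf : Continuous f) (hfi : f.Injective) (hg : Continuous g) (hgi : g.Injective) :
    IsMeagre (g ⁻¹' (f '' M)) := by
  let K (n : ℕ) : Set X := compactCovering X n ∩ closure M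
  have hK (n : ℕ) : IsCompact (K n) := (isCompact_compactCovering X n).inter_right isClosed_closure
  have hd (n : ℕ) : IsTotallyDisconnected (K n) := isTotallyDisconnected_of_interior_eq_empty
    (subset_empty_iff.mp ((interior_mono inter_subset_right).trans hM.subset))
  have hMK : M ⊆ ⋃ n, K n := by
    rw [← iUnion_inter, iUnion_compactCovering, univ_inter]
    exact subset_closure
  have hmeagre : IsMeagre (⋃ n, g ⁻¹' (f '' K n)) := isMeagre_iUnion fun n ↦
    (isNowhereDense_preimage_image_of_isCompact (hK n) (hd n) hf.continuousOn hfi.injOn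
      hg hgi).isMeagre
  rw [← preimage_iUnion, ← image_iUnion] at hmeagre
  exact hmeagre.mono (preimage_mono (image_mono hMK))

theorem stmt_7_general (hM : IsMeagre M) (hf : Continuous f) (hfi : f.Injective)
    (hg : Continuous g) (hgi : g.Injective) : IsMeagre (g ⁻¹' (f '' M)) := by
  obtain ⟨S, hS, hScount, hMS⟩ := isMeagre_iff_countable_union_isNowhereDense.mp hM
  have hmeagre : IsMeagre (⋃ s ∈ S, g ⁻¹' (f '' s)) := isMeagre_biUnion hScount fun s hs ↦
    isMeagre_preimage_image_of_isNowhereDense (hS s hs) hf hfi hg hgi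
  rw [← preimage_iUnion₂, ← image_iUnion₂, ← sUnion_eq_biUnion] at hmeagre
  exact hmeagre.mono (preimage_mono (image_mono hMS))

end MeagrePreimage

theorem stmt_7 (f g : ℝ → ℝ × ℝ)
    (hf : Topology.IsEmbedding f) (hg : Topology.IsEmbedding g)
    (M : Set ℝ) (hMc : IsClosed M) (hMnd : IsNowhereDense M) :
    IsMeagre (g ⁻¹' (f '' M)) :=
  stmt_7_general hMnd.isMeagre hf.continuous hf.injective hg.continuous hg.injective
end

section
/- Assume that a Sierpiński set exists. Then there exists a set A ⊆ ℝ² such that for every point p ∈ ℝ² and every vector v ∈ ℝ² with ‖v‖ = 1, the set {t ∈ ℝ : p + t·v ∈ A} is a strong Sierpiński set (i.e., the intersection of A with every straight line is a strong Sierpiński set under the unit-speed parametrization of the line). -/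
open Cardinal MeasureTheory Set
open scoped Pointwise

/-!
Rational translates turn a Sierpiński set into a Sierpiński set `S` meeting every Borel set of
positive measure in continuum many points: a Borel set of positive measure together with its
rational translates is conull, by Steinhaus. The set `A` consists of the vectors whose norm lies in
`S`. Along a line, the norm has a nonzero derivative at all but one point, so it maps null sets to
null sets, non-null sets to non-null sets, and has countable fibres. These three facts allow the
properties of `S` to be pulled back to the line.
-/

open Filter
open scoped NNReal ENNReal Topology InnerProductSpace

section Steinhaus

variable {G : Type*} [MeasurableSpace G]

theorem exists_measure_inter_preimage_add_right_ne_zero [AddGroup G] [MeasurableAdd₂ G]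
    {μ : Measure G} [SFinite μ] [μ.IsAddLeftInvariant] {B C : Set G}
    (hB : MeasurableSet B) (hC : MeasurableSet C) (hμB : μ B ≠ 0) (hμC : μ C ≠ 0) :
    ∃ x, μ (B ∩ (· + x) ⁻¹' C) ≠ 0 := by
  by_contra! hnull
  -- The shear `(x, y) ↦ (y, y + x)` preserves `μ × μ` and pulls `B ×ˢ C` back to null sections.
  have hprod := (measurePreserving_prod_add_swap μ μ).measure_preimage
    (hB.prod hC).nullMeasurableSet
  have hsections : μ.prod μ ((fun z : G × G => (z.2, z.2 + z.1)) ⁻¹' B ×ˢ C) = 0 :=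
    (Measure.measure_prod_null ((measurePreserving_prod_add_swap μ μ).measurable (hB.prod hC))).2
      (Eventually.of_forall hnull)
  rw [hsections, Measure.prod_prod] at hprod
  exact mul_ne_zero hμB hμC hprod.symm

variable [AddCommGroup G] [TopologicalSpace G] [IsTopologicalAddGroup G] [BorelSpace G]
  [SecondCountableTopology G] [LocallyCompactSpace G]
  {μ : Measure G} [μ.IsAddHaarMeasure] {B : Set G}

theorem nonempty_interior_sub_of_addHaar_ne_zero {C : Set G} (hC : MeasurableSet C)
    (hB : MeasurableSet B) (hμC : μ C ≠ 0) (hμB : μ B ≠ 0) : (interior (C - B)).Nonempty := by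
  obtain ⟨x, hx⟩ := exists_measure_inter_preimage_add_right_ne_zero hB hC hμB hμC
  set E := B ∩ (· + x) ⁻¹' C
  have hE : MeasurableSet E := hB.inter (measurable_add_const x hC)
  have hnhds : E - E ∈ 𝓝 (0 : G) :=
    Measure.sub_mem_nhds_zero_of_addHaar_pos μ E hE (pos_iff_ne_zero.2 hx)
  refine ⟨x, mem_interior_iff_mem_nhds.2 ?_⟩
  have hshift : (· - x) ⁻¹' (E - E) ∈ 𝓝 x :=
    (continuous_sub_right x).continuousAt.preimage_mem_nhds (by simpa only [sub_self] using hnhds)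
  refine mem_of_superset hshift ?_
  rintro y ⟨e, he, e', he', hy⟩
  refine ⟨e + x, he.2, e', he'.1, ?_⟩
  change e - e' = y - x at hy
  change e + x - e' = y
  rw [add_sub_right_comm, hy, sub_add_cancel]

theorem addHaar_compl_add_eq_zero_of_dense {Q : Set G} (hQc : Q.Countable) (hQd : Dense Q)
    (hB : MeasurableSet B) (hμB : μ B ≠ 0) : μ (Q + B)ᶜ = 0 := by
  have hQB : MeasurableSet (Q + B) := by
    rw [← iUnion_add_left_image]
    exact MeasurableSet.biUnion hQc fun q _ => hB.const_vadd q
  by_contra hμ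
  obtain ⟨q, hq, hqQ⟩ := hQd.inter_open_nonempty _ isOpen_interior
    (nonempty_interior_sub_of_addHaar_ne_zero hQB.compl hB hμ hμB)
  obtain ⟨c, hc, b, hb, rfl⟩ := interior_subset hq
  exact hc ⟨c - b, hqQ, b, hb, sub_add_cancel c b⟩

end Steinhaus

section Differentiable

variable {E : Type*} [NormedAddCommGroup E] [NormedSpace ℝ E] [FiniteDimensional ℝ E]
  [MeasurableSpace E] [BorelSpace E] (μ : Measure E) [μ.IsAddHaarMeasure]

theorem exists_forall_approximatesLinearOn_addHaar_eq_zero {A : E →L[ℝ] E} (hA : A.det ≠ 0) :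
    ∃ δ : ℝ≥0, δ ≠ 0 ∧ ∀ (s : Set E) (f : E → E), ApproximatesLinearOn f A s δ →
      μ (f '' s) = 0 → μ s = 0 := by
  obtain ⟨m, hm0, hm⟩ := ENNReal.lt_iff_exists_nnreal_btwn.1
    (ENNReal.ofReal_pos.2 (abs_pos.2 hA))
  obtain ⟨δ, hδ, hδ0⟩ :=
    ((mul_le_addHaar_image_of_lt_det μ A hm).and self_mem_nhdsWithin).exists
  refine ⟨δ, ne_of_gt hδ0, fun s f hf hfs => ?_⟩
  have hle : (m : ℝ≥0∞) * μ s ≤ 0 := hfs ▸ hδ s f hf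
  exact (mul_eq_zero.1 (nonpos_iff_eq_zero.1 hle)).resolve_left hm0.ne'

theorem addHaar_eq_zero_of_addHaar_image_eq_zero {f : E → E} {f' : E → E →L[ℝ] E} {s : Set E}
    (hf' : ∀ x ∈ s, HasFDerivWithinAt f (f' x) s x) (hdet : ∀ x ∈ s, (f' x).det ≠ 0)
    (hfs : μ (f '' s) = 0) : μ s = 0 := by
  rcases s.eq_empty_or_nonempty with rfl | hs
  · exact measure_empty
  have hδ (A : E →L[ℝ] E) : ∃ δ : ℝ≥0, δ ≠ 0 ∧ (A.det ≠ 0 → ∀ (t : Set E) (g : E → E),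
      ApproximatesLinearOn g A t δ → μ (g '' t) = 0 → μ t = 0) := by
    by_cases hA : A.det = 0
    · exact ⟨1, one_ne_zero, fun h => absurd hA h⟩
    · obtain ⟨δ, hδ0, hδ⟩ := exists_forall_approximatesLinearOn_addHaar_eq_zero μ hA
      exact ⟨δ, hδ0, fun _ => hδ⟩
  choose δ hδ0 hδ using hδ
  obtain ⟨t, A, -, hst, happrox, hA⟩ :=
    exists_closed_cover_approximatesLinearOn_of_hasFDerivWithinAt f s f' hf' δ hδ0
  have hpiece (n : ℕ) : μ (s ∩ t n) = 0 := by
    obtain ⟨y, hy, hAy⟩ := hA hs n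
    exact hδ (A n) (hAy ▸ hdet y hy) _ f (happrox n)
      (measure_mono_null (image_mono inter_subset_left) hfs)
  refine measure_mono_null ?_ (measure_iUnion_null hpiece)
  rw [← inter_iUnion]
  exact subset_inter subset_rfl hst

end Differentiable

section CriticalPoints

-- `deriv f x` is `0` where `f` is not differentiable, so `{x | deriv f x = 0}` consists of the
-- critical points together with the points of non-differentiability.

theorem countable_setOf_eq_and_deriv_ne_zero {𝕜 F : Type*} [NontriviallyNormedField 𝕜]
    [SecondCountableTopology 𝕜] [NormedAddCommGroup F] [NormedSpace 𝕜 F] (f : 𝕜 → F) (c : F) :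
    {x | f x = c ∧ deriv f x ≠ 0}.Countable := by
  set Z := {x | f x = c ∧ deriv f x ≠ 0}
  have hdiscrete : IsDiscrete Z := isDiscrete_iff_nhdsNE.2 fun x hx => by
    have hne : ∀ᶠ z in 𝓝[≠] x, f z ≠ c :=
      (differentiableAt_of_deriv_ne_zero hx.2).hasDerivAt.eventually_ne hx.2
    exact inf_principal_eq_bot.2 (hne.mono fun z hz hzZ => hz hzZ.1)
  have := hdiscrete.to_subtype
  exact (countable_of_Lindelof_of_discrete : Countable Z)

variable {f : ℝ → ℝ}

theorem countable_preimage_of_countable_deriv_eq_zero (hf : {x | deriv f x = 0}.Countable)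
    {T : Set ℝ} (hT : T.Countable) : (f ⁻¹' T).Countable := by
  refine (hf.union (hT.biUnion fun y _ => countable_setOf_eq_and_deriv_ne_zero f y)).mono
    fun x hx => ?_
  by_cases hx0 : deriv f x = 0
  · exact Or.inl hx0
  · exact Or.inr (mem_biUnion hx ⟨rfl, hx0⟩)

theorem volume_image_eq_zero_of_countable_deriv_eq_zero (hf : {x | deriv f x = 0}.Countable)
    {N : Set ℝ} (hN : volume N = 0) : volume (f '' N) = 0 := by
  set D := {x | deriv f x = 0}
  have hdiff : volume (f '' (N \ D)) = 0 :=
    addHaar_image_eq_zero_of_differentiableOn_of_addHaar_eq_zero volume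
      (fun x hx => (differentiableAt_of_deriv_ne_zero hx.2).differentiableWithinAt)
      (measure_mono_null sdiff_subset hN)
  refine measure_mono_null ?_ (measure_union_null hdiff ((hf.image f).measure_zero volume))
  rw [← image_union, sdiff_union_self]
  exact image_mono subset_union_left

theorem volume_eq_zero_of_volume_image_eq_zero (hf : {x | deriv f x = 0}.Countable)
    {s : Set ℝ} (hfs : volume (f '' s) = 0) : volume s = 0 := by
  set D := {x | deriv f x = 0}
  have hdiff : volume (s \ D) = 0 := by
    refine addHaar_eq_zero_of_addHaar_image_eq_zero volume (f := f)
      (f' := fun x => ContinuousLinearMap.toSpanSingleton ℝ (deriv f x)) (fun x hx => ?_)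
      (fun x hx => ?_) (measure_mono_null (image_mono sdiff_subset) hfs)
    · exact (differentiableAt_of_deriv_ne_zero hx.2).hasDerivAt.hasFDerivAt.hasFDerivWithinAt
    · simpa [D] using hx.2
  refine measure_mono_null ?_ (measure_union_null hdiff (hf.measure_zero volume))
  rw [sdiff_union_self]
  exact subset_union_left

end CriticalPoints

theorem mk_set_real_le_continuum (U : Set ℝ) : #U ≤ 𝔠 :=
  (mk_set_le U).trans_eq mk_real

theorem not_countable_of_mk_eq_continuum {α : Type*} {U : Set α} (hU : #U = 𝔠) : ¬ U.Countable :=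
  fun h => aleph0_lt_continuum.not_ge (hU ▸ h.le_aleph0)

/-- `S` is everywhere Sierpiński if each of its traces on Borel sets of positive measure is a
Sierpiński set. Such traces are required to have cardinality `𝔠`, whereas strong Sierpiński sets
only have uncountable ones; this is what guarantees that preimages of `S` have cardinality `𝔠`. -/
def IsEverywhereSierpinski (S : Set ℝ) : Prop :=
  ∀ B : Set ℝ, MeasurableSet B → 0 < volume B → IsSierpinski (S ∩ B)

namespace IsEverywhereSierpinski

variable {S : Set ℝ}

theorem of_continuum_le (hnull : ∀ N : Set ℝ, volume N = 0 → (S ∩ N).Countable)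
    (hpos : ∀ B : Set ℝ, MeasurableSet B → 0 < volume B → 𝔠 ≤ #(S ∩ B : Set ℝ)) :
    IsEverywhereSierpinski S := fun B hB hB0 =>
  ⟨(mk_set_real_le_continuum _).antisymm (hpos B hB hB0),
    fun N hN => (hnull N hN).mono (inter_subset_inter_left N inter_subset_left)⟩

theorem isSierpinski (hS : IsEverywhereSierpinski S) : IsSierpinski S := by
  simpa only [inter_univ] using hS univ MeasurableSet.univ (by simp)

theorem isStrongSierpinski (hS : IsEverywhereSierpinski S) : IsStrongSierpinski S :=
  ⟨hS.isSierpinski, fun B hB hB0 => not_countable_of_mk_eq_continuum (hS B hB hB0).1⟩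

theorem preimage {f : ℝ → ℝ} (hS : IsEverywhereSierpinski S) (hfc : Continuous f)
    (hf : {x | deriv f x = 0}.Countable) : IsEverywhereSierpinski (f ⁻¹' S) := by
  refine of_continuum_le (fun N hN => ?_) fun B hB hB0 => ?_
  · have hcount : (S ∩ f '' N).Countable :=
      hS.isSierpinski.2 _ (volume_image_eq_zero_of_countable_deriv_eq_zero hf hN)
    refine (countable_preimage_of_countable_deriv_eq_zero hf hcount).mono ?_
    exact fun x hx => ⟨hx.1, mem_image_of_mem f hx.2⟩
  · -- Passing to a compact subset makes the image measurable.
    obtain ⟨K, hKB, hK, hK0⟩ := hB.exists_lt_isCompact hB0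
    have hfK : 0 < volume (f '' K) :=
      pos_iff_ne_zero.2 fun h => hK0.ne' (volume_eq_zero_of_volume_image_eq_zero hf h)
    calc 𝔠 = #(S ∩ f '' K : Set ℝ) := (hS _ (hK.image hfc).measurableSet hfK).1.symm
      _ = #(f '' (f ⁻¹' S ∩ K)) := by rw [image_preimage_inter]
      _ ≤ #(f ⁻¹' S ∩ K : Set ℝ) := mk_image_le
      _ ≤ #(f ⁻¹' S ∩ B : Set ℝ) := mk_le_mk_of_subset (inter_subset_inter_right _ hKB)

end IsEverywhereSierpinski

namespace IsSierpinski

variable {S : Set ℝ}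

theorem countable_add (hS : IsSierpinski S) {Q : Set ℝ} (hQc : Q.Countable) (hQ : Q.Nonempty) :
    IsSierpinski (Q + S) := by
  refine ⟨(mk_set_real_le_continuum _).antisymm ?_, fun N hN => ?_⟩
  · obtain ⟨q, hq⟩ := hQ
    calc 𝔠 = #(q +ᵥ S : Set ℝ) := hS.1.symm.trans (mk_image_eq (add_right_injective q)).symm
      _ ≤ #(Q + S : Set ℝ) := mk_le_mk_of_subset (vadd_set_subset_add hq)
  · rw [← iUnion_add_left_image, iUnion₂_inter]
    refine hQc.biUnion fun q _ => ?_
    have hcount : (S ∩ (-q +ᵥ N)).Countable := hS.2 _ (by rwa [measure_vadd])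
    refine (hcount.image (q + ·)).mono ?_
    rintro _ ⟨⟨x, hx, rfl⟩, hxN⟩
    exact ⟨x, ⟨hx, mem_neg_vadd_set_iff.2 hxN⟩, rfl⟩

theorem isEverywhereSierpinski_of_add_eq (hS : IsSierpinski S) {H : AddSubgroup ℝ}
    (hHc : (H : Set ℝ).Countable) (hHd : Dense (H : Set ℝ)) (hHS : (H : Set ℝ) + S = S) :
    IsEverywhereSierpinski S := by
  refine .of_continuum_le hS.2 fun B hB hB0 => ?_
  have hcover : S ⊆ (H + (S ∩ B)) ∪ (S ∩ (H + B : Set ℝ)ᶜ) := fun x hx => by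
    by_cases hxB : x ∈ (H + B : Set ℝ)
    · obtain ⟨h, hh, b, hb, rfl⟩ := hxB
      have hbS : b ∈ S := by
        rw [← hHS]
        exact ⟨-h, H.neg_mem hh, h + b, hx, neg_add_cancel_left h b⟩
      exact Or.inl ⟨h, hh, b, ⟨hbS, hb⟩, rfl⟩
    · exact Or.inr ⟨hx, hxB⟩
  have hnull : (S ∩ (H + B : Set ℝ)ᶜ).Countable :=
    hS.2 _ (addHaar_compl_add_eq_zero_of_dense hHc hHd hB hB0.ne')
  have hle : 𝔠 ≤ ℵ₀ * #(S ∩ B : Set ℝ) + ℵ₀ := calc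
    𝔠 = #S := hS.1.symm
    _ ≤ #(H + (S ∩ B) : Set ℝ) + #(S ∩ (H + B : Set ℝ)ᶜ : Set ℝ) :=
      (mk_le_mk_of_subset hcover).trans (mk_union_le _ _)
    _ ≤ #(H : Set ℝ) * #(S ∩ B : Set ℝ) + ℵ₀ := add_le_add mk_add_le hnull.le_aleph0
    _ ≤ ℵ₀ * #(S ∩ B : Set ℝ) + ℵ₀ := by gcongr; exact hHc.le_aleph0
  by_contra! hlt
  exact hle.not_gt (add_lt_of_lt aleph0_le_continuum
    (mul_lt_of_lt aleph0_le_continuum aleph0_lt_continuum hlt) aleph0_lt_continuum)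

theorem exists_isEverywhereSierpinski (hS : IsSierpinski S) :
    ∃ T : Set ℝ, IsEverywhereSierpinski T := by
  set H : AddSubgroup ℝ := (Rat.castHom ℝ : ℚ →+ ℝ).range
  have hHc : (H : Set ℝ).Countable := countable_range (Rat.cast : ℚ → ℝ)
  have hHd : Dense (H : Set ℝ) := Rat.denseRange_cast
  have hHS : IsSierpinski (H + S) := hS.countable_add hHc (ZeroMemClass.coe_nonempty H)
  refine ⟨H + S, hHS.isEverywhereSierpinski_of_add_eq hHc hHd ?_⟩
  rw [← add_assoc, coe_add_coe]

end IsSierpinski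

section Line

variable {E : Type*} [NormedAddCommGroup E] [InnerProductSpace ℝ E]

theorem inner_eq_zero_of_deriv_norm_eq_zero {γ : ℝ → E} {γ' : E} {t : ℝ}
    (hγ : HasDerivAt γ γ' t) (ht : deriv (‖γ ·‖) t = 0) : ⟪γ t, γ'⟫_ℝ = 0 := by
  by_cases h0 : γ t = 0
  · rw [h0, inner_zero_left]
  have hnorm : HasDerivAt (‖γ ·‖) 0 t := ht ▸ (hγ.differentiableAt.norm ℝ h0).hasDerivAt
  have hsq : 2 * ⟪γ t, γ'⟫_ℝ = 0 := by
    simpa using hγ.norm_sq.unique (hnorm.pow 2)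
  linarith

theorem subsingleton_setOf_deriv_norm_line_eq_zero (p : E) {v : E} (hv : v ≠ 0) :
    {t : ℝ | deriv (fun t : ℝ => ‖p + t • v‖) t = 0}.Subsingleton := by
  have horth (t : ℝ) (ht : deriv (fun t : ℝ => ‖p + t • v‖) t = 0) :
      ⟪p, v⟫_ℝ + t * ⟪v, v⟫_ℝ = 0 := by
    have hline : HasDerivAt (fun t : ℝ => p + t • v) v t := by
      simpa using ((hasDerivAt_id t).smul_const v).const_add p
    simpa only [inner_add_left, real_inner_smul_left] using
      inner_eq_zero_of_deriv_norm_eq_zero hline ht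
  intro s hs t ht
  refine mul_right_cancel₀ (inner_self_ne_zero.2 hv : ⟪v, v⟫_ℝ ≠ 0) ?_
  linarith [horth s hs, horth t ht]

theorem IsEverywhereSierpinski.norm_line_preimage {S : Set ℝ} (hS : IsEverywhereSierpinski S)
    (p : E) {v : E} (hv : v ≠ 0) : IsEverywhereSierpinski {t : ℝ | ‖p + t • v‖ ∈ S} :=
  hS.preimage (by fun_prop) (subsingleton_setOf_deriv_norm_line_eq_zero p hv).countable

end Line

theorem stmt_9_general {E : Type*} [NormedAddCommGroup E] [InnerProductSpace ℝ E]
    (hS : ∃ S : Set ℝ, IsSierpinski S) :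
    ∃ A : Set E, ∀ p v : E, v ≠ 0 → IsStrongSierpinski {t : ℝ | p + t • v ∈ A} := by
  obtain ⟨S, hS⟩ := hS
  obtain ⟨T, hT⟩ := hS.exists_isEverywhereSierpinski
  exact ⟨{x | ‖x‖ ∈ T}, fun p v hv => (hT.norm_line_preimage p hv).isStrongSierpinski⟩

theorem stmt_9 (hS : ∃ S : Set ℝ, IsSierpinski S) :
    ∃ A : Set (EuclideanSpace ℝ (Fin 2)),
      ∀ (p v : EuclideanSpace ℝ (Fin 2)), ‖v‖ = 1 →
        IsStrongSierpinski {t : ℝ | p + t • v ∈ A} := by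
  obtain ⟨A, hA⟩ := stmt_9_general (E := EuclideanSpace ℝ (Fin 2)) hS
  exact ⟨A, fun p v hv => hA p v (ne_zero_of_norm_ne_zero (hv ▸ one_ne_zero))⟩
end
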